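/- Let P and Q be irreducible aperiodic stochastic matrices on finite state sets. If the mixing Markov shifts determined by P and Q are finitarily isomorphic with finite expected code times, then Γ_P = Γ_Q, Δ_P = Δ_Q, and for every n ≥ 1 the ratio of any strictly positive weight of a cycle of length n in P to any strictly positive weight of a cycle of length n in Q belongs to Δ_P (equality of the distinguished generators c_PΔ_P = c_QΔ_Q of the cyclic quotients Γ/Δ). -/

import Mathlib

open MeasureTheory ENNReal Filter

noncomputable section

/-- The left shift transformation on bi-infinite sequences: `(shift x) n = x (n+1)`. -/
def shift {A : Type*} : (ℤ → A) → (ℤ → A) := fun x n => x (n + 1)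

/-- `φ` is a homomorphism (factor map) from the shift system `(ℤ → A, μ, shift)` to
`(ℤ → B, ν, shift)`, defined on the shift-invariant full-measure domain `D`. -/
structure IsFactorMap {A B : Type*} [MeasurableSpace A] [MeasurableSpace B]
    (μ : Measure (ℤ → A)) (ν : Measure (ℤ → B))
    (D : Set (ℤ → A)) (φ : (ℤ → A) → (ℤ → B)) : Prop where
  measurable_map : Measurable φ
  dom_measurable : MeasurableSet D
  dom_shift_invariant : shift ⁻¹' D = D
  dom_full : μ D = 1
  pushforward : ν = μ.map φ
  equivariant : ∀ x ∈ D, φ (shift x) = shift (φ x)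

/-- The window `[-q, r]` of `x` determines the zero coordinate of the image under `φ`
(among points of the domain `D`). -/
def DeterminesAt {A B : Type*} (D : Set (ℤ → A)) (φ : (ℤ → A) → (ℤ → B))
    (q r : ℕ) (x : ℤ → A) : Prop :=
  ∀ y ∈ D, (∀ i : ℤ, -(q : ℤ) ≤ i → i ≤ (r : ℤ) → y i = x i) → φ y 0 = φ x 0

/-- A homomorphism `φ` with domain `D` is finitary if for almost every `x` in the domain
there are nonnegative integers `q`, `r` such that the coordinates `x_{-q}, …, x_r`
determine `(φ x)_0`. -/
def IsFinitary {A B : Type*} [MeasurableSpace A] [MeasurableSpace B]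
    (μ : Measure (ℤ → A)) (D : Set (ℤ → A)) (φ : (ℤ → A) → (ℤ → B)) : Prop :=
  ∀ᵐ x ∂μ, x ∈ D → ∃ q r : ℕ, DeterminesAt D φ q r x

/-- The code length `C(x) = q(x) + r(x)` with `q(x), r(x)` minimal such that the window
`[-q(x), r(x)]` determines the zero output coordinate (`⊤` if no finite window works). -/
def codeLength {A B : Type*} (D : Set (ℤ → A)) (φ : (ℤ → A) → (ℤ → B))
    (x : ℤ → A) : ℝ≥0∞ :=
  ⨅ (q : ℕ) (r : ℕ) (_ : DeterminesAt D φ q r x), ((q : ℝ≥0∞) + (r : ℝ≥0∞))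

/-- `μ` is the Bernoulli (product) measure on `(ℤ → A)` given by the probability vector `p`. -/
def IsBernoulliMeasure {A : Type*} [MeasurableSpace A] (μ : Measure (ℤ → A)) (p : A → ℝ) : Prop :=
  ∀ (F : Finset ℤ) (s : ℤ → A),
    μ {x | ∀ i ∈ F, x i = s i} = ENNReal.ofReal (∏ i ∈ F, p (s i))

/-- A strictly positive probability vector on a finite alphabet. -/
def IsProbVector {A : Type*} [Fintype A] (p : A → ℝ) : Prop :=
  (∀ i, 0 < p i) ∧ ∑ i, p i = 1

/-- The entropy `H(p) = -∑ p_i log p_i` of a probability vector. -/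
def vecEntropy {A : Type*} [Fintype A] (p : A → ℝ) : ℝ := -∑ i, p i * Real.log (p i)

/-- A finitary isomorphism: a pair of mutually inverse finitary factor maps. -/
def IsFinitaryIsomorphism {A B : Type*} [MeasurableSpace A] [MeasurableSpace B]
    (μ : Measure (ℤ → A)) (ν : Measure (ℤ → B))
    (D : Set (ℤ → A)) (E : Set (ℤ → B))
    (φ : (ℤ → A) → (ℤ → B)) (ψ : (ℤ → B) → (ℤ → A)) : Prop :=
  IsFactorMap μ ν D φ ∧ IsFactorMap ν μ E ψ ∧
  IsFinitary μ D φ ∧ IsFinitary ν E ψ ∧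
  (∀ x ∈ D, φ x ∈ E ∧ ψ (φ x) = x) ∧ (∀ y ∈ E, ψ y ∈ D ∧ φ (ψ y) = y)

/-- A stochastic matrix: nonnegative entries, rows summing to one. -/
def IsStochastic {S : Type*} [Fintype S] (P : Matrix S S ℝ) : Prop :=
  (∀ i j, 0 ≤ P i j) ∧ ∀ i, ∑ j, P i j = 1

/-- Irreducible and aperiodic (primitive): some power has all entries strictly positive. -/
def IsPrimitive {S : Type*} [Fintype S] [DecidableEq S] (P : Matrix S S ℝ) : Prop :=
  ∃ n : ℕ, ∀ i j, 0 < (P ^ n) i j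

/-- Irreducible: every state leads to every state in some positive number of steps. -/
def IsIrreducibleMat {S : Type*} [Fintype S] [DecidableEq S] (P : Matrix S S ℝ) : Prop :=
  ∀ i j, ∃ n : ℕ, 0 < n ∧ 0 < (P ^ n) i j

/-- A stationary probability vector for `P`. -/
def IsStationaryVector {S : Type*} [Fintype S] (P : Matrix S S ℝ) (ppi : S → ℝ) : Prop :=
  (∀ i, 0 ≤ ppi i) ∧ (∑ i, ppi i = 1) ∧ ∀ j, ∑ i, ppi i * P i j = ppi j

/-- `μ` is the (stationary) Markov measure on `(ℤ → S)` determined by the stochastic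
matrix `P` with stationary vector `ppi`. -/
def IsMarkovMeasure {S : Type*} [Fintype S] [MeasurableSpace S]
    (μ : Measure (ℤ → S)) (P : Matrix S S ℝ) (ppi : S → ℝ) : Prop :=
  ∀ (m n : ℤ), m ≤ n → ∀ w : ℤ → S,
    μ {x | ∀ i : ℤ, m ≤ i → i ≤ n → x i = w i} =
      ENNReal.ofReal (ppi (w m) * ∏ i ∈ Finset.Ico m n, P (w i) (w (i + 1)))

/-- The entropy `h(P) = -∑_{i,j} π_i P(i,j) log P(i,j)` of the Markov shift of `P`. -/
def markovEntropy {S : Type*} [Fintype S] (P : Matrix S S ℝ) (ppi : S → ℝ) : ℝ :=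
  -∑ i, ∑ j, ppi i * P i j * Real.log (P i j)

/-- The weight `P(c_0,c_1) ⋯ P(c_{n-1},c_n)` of the path `c_0, …, c_n` in `P`. -/
def cycleWeight {S : Type*} (P : Matrix S S ℝ) (n : ℕ) (c : ℕ → S) : ℝ :=
  ∏ i ∈ Finset.range n, P (c i) (c (i + 1))

/-- `c` describes a cycle of length `n`: it returns to its starting state. -/
def IsCycle {S : Type*} (n : ℕ) (c : ℕ → S) : Prop := c n = c 0

/-- Krieger's Δ-group: the multiplicative subgroup of the positive reals (inside `ℝˣ`)
generated by ratios of strictly positive weights of two cycles of the same length through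
the same state. -/
def DeltaGroup {S : Type*} (P : Matrix S S ℝ) : Subgroup ℝˣ :=
  Subgroup.closure {u : ℝˣ | ∃ (n : ℕ) (c d : ℕ → S), 0 < n ∧ IsCycle n c ∧ IsCycle n d ∧
    c 0 = d 0 ∧ 0 < cycleWeight P n c ∧ 0 < cycleWeight P n d ∧
    (u : ℝ) = cycleWeight P n c / cycleWeight P n d}

/-- The Γ-group of Parry–Schmidt: the multiplicative subgroup of the positive reals (inside
`ℝˣ`) generated by all strictly positive cycle weights. -/
def GammaGroup {S : Type*} (P : Matrix S S ℝ) : Subgroup ℝˣ :=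
  Subgroup.closure {u : ℝˣ | ∃ (n : ℕ) (c : ℕ → S), 0 < n ∧ IsCycle n c ∧
    0 < cycleWeight P n c ∧ (u : ℝ) = cycleWeight P n c}

/-- The matrix `P^{(t)}` with entries `P(i,j)^t` where `P(i,j) > 0`, and `0` elsewhere,
viewed as a complex matrix. -/
def betaMatrix {S : Type*} (P : Matrix S S ℝ) (t : ℝ) : Matrix S S ℂ :=
  Matrix.of fun i j => if 0 < P i j then ((P i j ^ t : ℝ) : ℂ) else 0

/-- Tuncel's β-function: `β_P(t)` is the spectral radius of `P^{(t)}`. -/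
def betaFunction {S : Type*} [Fintype S] [DecidableEq S] (P : Matrix S S ℝ) (t : ℝ) : ℝ≥0∞ :=
  spectralRadius ℂ (betaMatrix P t)

/-- Two shift systems are finitarily isomorphic with finite expected code times (fect):
there is a finitary isomorphism such that the code lengths of the map and of its inverse
both have finite expectation. -/
def FinitarilyIsomorphicFect {A B : Type*} [MeasurableSpace A] [MeasurableSpace B]
    (μ : Measure (ℤ → A)) (ν : Measure (ℤ → B)) : Prop :=
  ∃ (D : Set (ℤ → A)) (E : Set (ℤ → B)) (φ : (ℤ → A) → (ℤ → B)) (ψ : (ℤ → B) → (ℤ → A)),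
    IsFinitaryIsomorphism μ ν D E φ ψ ∧
    (∫⁻ x, codeLength D φ x ∂μ) < ⊤ ∧ (∫⁻ y, codeLength E ψ y ∂ν) < ⊤

/-! ### Weights of paths indexed by integers -/

/-- The weight of the path `w m, …, w n`. -/
def pathWeight {S : Type*} (P : Matrix S S ℝ) (m n : ℤ) (w : ℤ → S) : ℝ :=
  ∏ i ∈ Finset.Ico m n, P (w i) (w (i + 1))

theorem pathWeight_split {S : Type*} (P : Matrix S S ℝ) {m k n : ℤ} (hmk : m ≤ k) (hkn : k ≤ n)
    (w : ℤ → S) : pathWeight P m n w = pathWeight P m k w * pathWeight P k n w := by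
  unfold pathWeight
  rw [← Finset.Ico_union_Ico_eq_Ico hmk hkn,
    Finset.prod_union (Finset.Ico_disjoint_Ico_consecutive m k n)]

theorem pathWeight_congr {S : Type*} (P : Matrix S S ℝ) {m n : ℤ} {w w' : ℤ → S}
    (h : ∀ i, m ≤ i → i ≤ n → w i = w' i) : pathWeight P m n w = pathWeight P m n w' := by
  unfold pathWeight
  refine Finset.prod_congr rfl fun i hi => ?_
  rw [Finset.mem_Ico] at hi
  rw [h i (by lia) (by lia), h (i + 1) (by lia) (by lia)]

theorem pathWeight_shift {S : Type*} (P : Matrix S S ℝ) (m n k : ℤ) (w : ℤ → S) :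
    pathWeight P (m + k) (n + k) w = pathWeight P m n (fun i => w (i + k)) := by
  unfold pathWeight
  rw [← Finset.map_add_right_Ico, Finset.prod_map]
  refine Finset.prod_congr rfl fun i _ => ?_
  simp only [addRightEmbedding_apply]
  rw [show i + k + 1 = i + 1 + k by ring]

theorem pathWeight_nonneg {S : Type*} {P : Matrix S S ℝ} (hP : ∀ i j, 0 ≤ P i j) (m n : ℤ)
    (w : ℤ → S) : 0 ≤ pathWeight P m n w :=
  Finset.prod_nonneg fun _ _ => hP _ _

theorem pathWeight_eq_cycleWeight {S : Type*} (P : Matrix S S ℝ) (lo : ℤ) (n : ℕ) (w : ℤ → S) :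
    pathWeight P lo (lo + n) w = cycleWeight P n (fun i => w (lo + i)) := by
  induction n with
  | zero => simp [pathWeight, cycleWeight]
  | succ n ih =>
    rw [pathWeight_split P (k := lo + n) (by lia) (by push_cast; lia), ih, cycleWeight, cycleWeight,
      Finset.prod_range_succ]
    congr 1
    have : Finset.Ico (lo + n) (lo + ((n + 1 : ℕ) : ℤ)) = {lo + (n : ℤ)} := by
      ext i; simp only [Finset.mem_Ico, Finset.mem_singleton]; push_cast; lia
    rw [pathWeight, this, Finset.prod_singleton]
    push_cast
    rw [add_assoc]

/-! ### Cylinder sets -/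

/-- The cylinder of the sequences agreeing with `w` on the integer interval `[m, n]`. -/
def cyl {A : Type*} (m n : ℤ) (w : ℤ → A) : Set (ℤ → A) :=
  {x | ∀ i : ℤ, m ≤ i → i ≤ n → x i = w i}

theorem measurableSet_cyl {A : Type*} [MeasurableSpace A] [DiscreteMeasurableSpace A]
    (m n : ℤ) (w : ℤ → A) : MeasurableSet (cyl m n w) := by
  have : cyl m n w = ⋂ (i : ℤ) (_ : m ≤ i) (_ : i ≤ n), (fun x : ℤ → A => x i) ⁻¹' {w i} := by
    ext x; simp [cyl]
  rw [this]
  exact MeasurableSet.iInter fun i => MeasurableSet.iInter fun _ => MeasurableSet.iInter fun _ =>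
    measurable_pi_apply i (MeasurableSet.of_discrete)

/-- Finitely many words suffice to describe all cylinders over `[m, n]`. -/
theorem exists_countable_words (A : Type*) [Finite A] [Nonempty A] (m n : ℤ) :
    ∃ F : Set (ℤ → A), F.Countable ∧ ∀ x : ℤ → A, ∃ w ∈ F, x ∈ cyl m n w := by
  classical
  obtain ⟨s⟩ := ‹Nonempty A›
  refine ⟨Set.range fun (f : Finset.Icc m n → A) (i : ℤ) =>
    if h : i ∈ Finset.Icc m n then f ⟨i, h⟩ else s, Set.countable_range _, fun x => ?_⟩
  refine ⟨_, ⟨fun i => x i, rfl⟩, fun i h1 h2 => ?_⟩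
  simp [h1, h2]

/-- A finite measure on two-sided sequences over a finite alphabet is determined by its values
on large symmetric cylinders. -/
theorem measure_ext_of_cyl {A : Type*} [Finite A] [MeasurableSpace A] [DiscreteMeasurableSpace A]
    {μ ν : Measure (ℤ → A)} [IsFiniteMeasure μ] (K₀ : ℕ)
    (h : ∀ K : ℕ, K₀ ≤ K → ∀ w, μ (cyl (-K) K w) = ν (cyl (-K) K w)) : μ = ν := by
  classical
  have key : ∀ I : Finset ℤ, ν.map I.restrict = μ.map I.restrict := by
    intro I
    obtain ⟨K, hK₀, hK⟩ : ∃ K : ℕ, K₀ ≤ K ∧ I ⊆ Finset.Icc (-(K : ℤ)) K := by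
      refine ⟨K₀ + ∑ i ∈ I, i.natAbs, by lia, fun i hi => ?_⟩
      have := Finset.single_le_sum (f := fun i : ℤ => i.natAbs) (fun _ _ => Nat.zero_le _) hi
      simp only [Finset.mem_Icc] at this ⊢
      lia
    have hJ : ν.map (Finset.Icc (-(K : ℤ)) K).restrict =
        μ.map (Finset.Icc (-(K : ℤ)) K).restrict := by
      refine Measure.ext_of_singleton fun f => ?_
      have h0 : (0 : ℤ) ∈ Finset.Icc (-(K : ℤ)) K := by simp
      have hset : ((Finset.Icc (-(K : ℤ)) K).restrict : (ℤ → A) → _) ⁻¹' {f} = cyl (-K) K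
          (fun i => if h : i ∈ Finset.Icc (-(K : ℤ)) K then f ⟨i, h⟩ else f ⟨0, h0⟩) := by
        ext x
        simp only [Set.mem_preimage, Set.mem_singleton_iff, cyl, Set.mem_ofPred_eq]
        constructor
        · rintro rfl i h1 h2
          simp [h1, h2]
        · intro hx
          ext ⟨i, hi⟩
          have hi' := Finset.mem_Icc.mp hi
          simpa [hi'.1, hi'.2] using hx i hi'.1 hi'.2
      rw [Measure.map_apply (Finset.measurable_restrict _) (measurableSet_singleton _),
        Measure.map_apply (Finset.measurable_restrict _) (measurableSet_singleton _), hset,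
        h K hK₀]
    rw [← Finset.restrict₂_comp_restrict hK,
      ← Measure.map_map (Finset.measurable_restrict₂ hK) (Finset.measurable_restrict _), hJ,
      Measure.map_map (Finset.measurable_restrict₂ hK) (Finset.measurable_restrict _)]
  exact IsProjectiveLimit.unique (P := fun I : Finset ℤ => μ.map I.restrict)
    (fun _ => rfl) key

theorem IsMarkovMeasure.measure_cyl {S : Type*} [Fintype S] [MeasurableSpace S]
    {μ : Measure (ℤ → S)} {P : Matrix S S ℝ} {p : S → ℝ} (h : IsMarkovMeasure μ P p)
    {m n : ℤ} (hmn : m ≤ n) (w : ℤ → S) :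
    μ (cyl m n w) = ENNReal.ofReal (p (w m) * pathWeight P m n w) :=
  h m n hmn w

theorem IsMarkovMeasure.isProbabilityMeasure {S : Type*} [Fintype S] [MeasurableSpace S]
    [DiscreteMeasurableSpace S] {μ : Measure (ℤ → S)} {P : Matrix S S ℝ} {p : S → ℝ}
    (h : IsMarkovMeasure μ P p) (hp : IsStationaryVector P p) : IsProbabilityMeasure μ := by
  constructor
  have hs : ∀ s, μ ((fun x : ℤ → S => x 0) ⁻¹' {s}) = ENNReal.ofReal (p s) := by
    intro s
    have h0 := h.measure_cyl (le_refl 0) (fun _ => s)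
    have : cyl (0 : ℤ) 0 (fun _ => s) = (fun x : ℤ → S => x 0) ⁻¹' {s} := by
      ext x
      refine ⟨fun hx => hx 0 le_rfl le_rfl, fun hx i h1 h2 => ?_⟩
      obtain rfl : i = 0 := le_antisymm h2 h1
      exact hx
    rw [← this, h0]
    simp [pathWeight]
  have hm := sum_measure_preimage_singleton (μ := μ) (f := fun x : ℤ → S => x 0) Finset.univ
    (fun s _ => measurable_pi_apply 0 (MeasurableSet.of_discrete))
  simp only [hs, Finset.coe_univ, Set.preimage_univ] at hm
  rw [← hm, ← ENNReal.ofReal_sum_of_nonneg fun i _ => hp.1 i, hp.2.1, ENNReal.ofReal_one]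

/-! ### Shifting by an integer -/

/-- The `k`-th power of the shift, for an integer `k`. -/
def shiftBy {A : Type*} (k : ℤ) (x : ℤ → A) : ℤ → A := fun i => x (i + k)

theorem measurable_shiftBy {A : Type*} [MeasurableSpace A] (k : ℤ) :
    Measurable (shiftBy (A := A) k) :=
  measurable_pi_lambda _ fun i => measurable_pi_apply (i + k)

theorem shiftBy_add_one {A : Type*} (k : ℤ) (x : ℤ → A) :
    shiftBy (k + 1) x = shift (shiftBy k x) := by
  ext i; simp only [shiftBy, shift]; congr 1; ring

theorem shiftBy_zero {A : Type*} (x : ℤ → A) : shiftBy 0 x = x := by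
  ext i; simp [shiftBy]

theorem IsMarkovMeasure.map_shiftBy {S : Type*} [Fintype S] [MeasurableSpace S]
    [DiscreteMeasurableSpace S] {μ : Measure (ℤ → S)} [IsFiniteMeasure μ] {P : Matrix S S ℝ}
    {p : S → ℝ} (h : IsMarkovMeasure μ P p) (k : ℤ) : μ.map (shiftBy k) = μ := by
  refine measure_ext_of_cyl 0 fun K _ w => ?_
  have hset : shiftBy k ⁻¹' cyl (-K) K w = cyl (-(K : ℤ) + k) (K + k) (shiftBy (-k) w) := by
    ext x
    simp only [Set.mem_preimage, cyl, Set.mem_ofPred_eq, shiftBy]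
    refine ⟨fun hx i h1 h2 => ?_, fun hx i h1 h2 => ?_⟩
    · have := hx (i + -k) (by lia) (by lia)
      rwa [neg_add_cancel_right] at this
    · have := hx (i + k) (by lia) (by lia)
      rwa [add_neg_cancel_right] at this
  rw [Measure.map_apply (measurable_shiftBy k) (measurableSet_cyl _ _ _), hset,
    h.measure_cyl (by lia), h.measure_cyl (by lia), pathWeight_shift]
  simp [shiftBy]

section Equivariance

variable {A B : Type*} [MeasurableSpace A] [MeasurableSpace B] {μ : Measure (ℤ → A)}
  {ν : Measure (ℤ → B)} {D : Set (ℤ → A)} {φ : (ℤ → A) → (ℤ → B)}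

theorem IsFactorMap.shiftBy_mem_iff (h : IsFactorMap μ ν D φ) (k : ℤ) (x : ℤ → A) :
    shiftBy k x ∈ D ↔ x ∈ D := by
  have hstep : ∀ k : ℤ, shiftBy (k + 1) x ∈ D ↔ shiftBy k x ∈ D := by
    intro k
    rw [shiftBy_add_one, ← Set.mem_preimage, h.dom_shift_invariant]
  induction k with
  | zero => rw [shiftBy_zero]
  | succ k ih => exact (hstep _).trans ih
  | pred k ih =>
    rw [← hstep, sub_add_cancel]
    exact ih

theorem IsFactorMap.map_shiftBy (h : IsFactorMap μ ν D φ) (k : ℤ) {x : ℤ → A} (hx : x ∈ D) :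
    φ (shiftBy k x) = shiftBy k (φ x) := by
  have hstep : ∀ k : ℤ, φ (shiftBy (k + 1) x) = shift (φ (shiftBy k x)) := by
    intro k
    rw [shiftBy_add_one, h.equivariant _ ((h.shiftBy_mem_iff k x).mpr hx)]
  have hinj : Function.Injective (shift (A := B)) := by
    intro y z hyz
    ext i
    have := congrFun hyz (i - 1)
    simpa [shift] using this
  induction k with
  | zero => rw [shiftBy_zero, shiftBy_zero]
  | succ k ih => rw [hstep, ih, ← shiftBy_add_one]
  | pred k ih =>
    apply hinj
    rw [← hstep, ← shiftBy_add_one, sub_add_cancel, ih]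

end Equivariance

/-! ### Code lengths -/

theorem measurableSet_determinesAt {A B : Type*} [Finite A] [Finite B] [MeasurableSpace A]
    [DiscreteMeasurableSpace A] [MeasurableSpace B] [DiscreteMeasurableSpace B]
    (D : Set (ℤ → A)) {φ : (ℤ → A) → (ℤ → B)} (hφ : Measurable φ) (q r : ℕ) :
    MeasurableSet {x | DeterminesAt D φ q r x} := by
  let J := Finset.Icc (-(q : ℤ)) r
  let g : (ℤ → A) → (J → A) × B := fun x => (J.restrict x, φ x 0)
  have hg : Measurable g :=
    (Finset.measurable_restrict J).prodMk ((measurable_pi_apply 0).comp hφ)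
  have hset : {x | DeterminesAt D φ q r x} =
      g ⁻¹' {p | ∀ y ∈ D, J.restrict y = p.1 → φ y 0 = p.2} := by
    ext x
    simp only [DeterminesAt, Set.mem_ofPred_eq, Set.mem_preimage, g]
    refine forall₂_congr fun y _ => imp_congr_left ?_
    rw [funext_iff]
    simp [J]
  rw [hset]
  exact hg (Set.toFinite _).measurableSet

theorem measurable_codeLength {A B : Type*} [Finite A] [Finite B] [MeasurableSpace A]
    [DiscreteMeasurableSpace A] [MeasurableSpace B] [DiscreteMeasurableSpace B]
    (D : Set (ℤ → A)) {φ : (ℤ → A) → (ℤ → B)} (hφ : Measurable φ) :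
    Measurable (codeLength D φ) := by
  classical
  unfold codeLength
  refine Measurable.iInf fun q => Measurable.iInf fun r => ?_
  have : (fun x => ⨅ (_ : DeterminesAt D φ q r x), ((q : ℝ≥0∞) + (r : ℝ≥0∞))) =
      fun x => if DeterminesAt D φ q r x then ((q : ℝ≥0∞) + (r : ℝ≥0∞)) else ⊤ := by
    ext x
    split_ifs with h <;> simp [h]
  rw [this]
  exact Measurable.ite (measurableSet_determinesAt D hφ q r) measurable_const measurable_const

/-- The tail sum of a nonnegative integrable function is finite. -/
theorem tsum_measure_natCast_lt_ne_top {Ω : Type*} [MeasurableSpace Ω] {μ : Measure Ω}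
    [IsProbabilityMeasure μ] {f : Ω → ℝ≥0∞} (hf : Measurable f) (hlen : ∫⁻ x, f x ∂μ < ⊤) :
    ∑' n : ℕ, μ {x | (n : ℝ≥0∞) < f x} ≠ ⊤ := by
  let _ : MeasureSpace Ω := ⟨μ⟩
  have : IsProbabilityMeasure (volume : Measure Ω) := ‹IsProbabilityMeasure μ›
  have h := ProbabilityTheory.tsum_prob_mem_Ioi_lt_top
    (integrable_toReal_of_lintegral_ne_top (μ := μ) hf.aemeasurable hlen.ne)
    (fun _ => ENNReal.toReal_nonneg)
  refine ne_of_eq_of_ne (tsum_congr fun n => measure_congr ?_) h.ne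
  filter_upwards [ae_lt_top hf hlen.ne] with x hx
  refine propext ?_
  change (n : ℝ≥0∞) < f x ↔ (n : ℝ) < (f x).toReal
  rw [← ENNReal.toReal_natCast n, ENNReal.toReal_lt_toReal (by simp) hx.ne]

/-- Along any sequence of shifts, almost every point eventually has code length at most equal to
the index. -/
theorem ae_eventually_determinesAt {A B : Type*} [Fintype A] [Finite B] [MeasurableSpace A]
    [DiscreteMeasurableSpace A] [MeasurableSpace B] [DiscreteMeasurableSpace B]
    {μ : Measure (ℤ → A)} [IsProbabilityMeasure μ] {P : Matrix A A ℝ} {p : A → ℝ}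
    (hμ : IsMarkovMeasure μ P p) {D : Set (ℤ → A)} {φ : (ℤ → A) → (ℤ → B)} (hφ : Measurable φ)
    (hlen : ∫⁻ x, codeLength D φ x ∂μ < ⊤) (k : ℕ → ℤ) :
    ∀ᵐ x ∂μ, ∀ᶠ n : ℕ in atTop, ∃ q r : ℕ, q + r ≤ n ∧ DeterminesAt D φ q r (shiftBy (k n) x) := by
  have hC := measurable_codeLength D hφ
  have hsum : ∑' n : ℕ, μ (shiftBy (k n) ⁻¹' {x | (n : ℝ≥0∞) < codeLength D φ x}) ≠ ⊤ := by
    convert tsum_measure_natCast_lt_ne_top hC hlen using 3 with n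
    rw [← Measure.map_apply (measurable_shiftBy (k n))
      (measurableSet_lt measurable_const hC), hμ.map_shiftBy]
  filter_upwards [ae_eventually_notMem hsum] with x hx
  filter_upwards [hx] with n hn
  have hn' : codeLength D φ (shiftBy (k n) x) < (n : ℝ≥0∞) + 1 :=
    (not_lt.mp hn).trans_lt (ENNReal.lt_add_right (by simp) one_ne_zero)
  simp only [codeLength, iInf_lt_iff] at hn'
  obtain ⟨q, r, hd, hlt⟩ := hn'
  refine ⟨q, r, ?_, hd⟩
  have : q + r < n + 1 := by exact_mod_cast hlt
  lia

/-! ### Replacing one word by another -/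

/-- Replace the word of `x` on `(lo, hi]` by the word of `v` on `(lo, hi']`, translating the part
of `x` to the right of `hi` accordingly. -/
def surgery {A : Type*} (lo hi hi' : ℤ) (v x : ℤ → A) : ℤ → A := fun i =>
  if i ≤ lo then x i else if i ≤ hi' then v i else x (i + (hi - hi'))

theorem measurable_surgery {A : Type*} [MeasurableSpace A] (lo hi hi' : ℤ) (v : ℤ → A) :
    Measurable (surgery lo hi hi' v) := by
  refine measurable_pi_lambda _ fun i => ?_
  unfold surgery
  split_ifs
  · exact measurable_pi_apply i
  · exact measurable_const
  · exact measurable_pi_apply _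

section Surgery

variable {A : Type*} {lo hi hi' : ℤ} {u v : ℤ → A}

theorem surgery_mem_cyl (hlo : lo ≤ hi) (huv : u lo = v lo) {x : ℤ → A} (hx : x ∈ cyl lo hi u) :
    surgery lo hi hi' v x ∈ cyl lo hi' v := by
  intro i h1 h2
  unfold surgery
  split_ifs with h
  · obtain rfl : i = lo := le_antisymm h h1
    rw [hx i le_rfl hlo, huv]
  · rfl

theorem surgery_surgery (hlo' : lo ≤ hi') {x : ℤ → A} (hx : x ∈ cyl lo hi u) :
    surgery lo hi' hi u (surgery lo hi hi' v x) = x := by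
  ext i
  unfold surgery
  split_ifs with h1 h2 h3 h4
  · rfl
  · exact (hx i (by lia) h2).symm
  · lia
  · lia
  · congr 1; ring

theorem surgery_preimage_inter_cyl (hlo : lo ≤ hi) (hlo' : lo ≤ hi') (huv : u lo = v lo)
    {K : ℤ} (hK : -K ≤ lo) (hK' : hi' ≤ K) {z : ℤ → A} (hz : z ∈ cyl lo hi' v) :
    surgery lo hi hi' v ⁻¹' cyl (-K) K z ∩ cyl lo hi u =
      cyl (-K) (K + (hi - hi')) (surgery lo hi' hi u z) := by
  ext x
  constructor
  · rintro ⟨hT, hu⟩ i h1 h2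
    have hxi := congrFun (surgery_surgery (v := v) hlo' hu) i
    rw [← hxi]
    unfold surgery at hT ⊢
    split_ifs with h3 h4 h5 h6
    · have := hT i (by lia) (by lia)
      simpa only [h3, if_true] using this
    · rfl
    · lia
    · lia
    have := hT (i + (hi' - hi)) (by lia) (by lia)
    simp only at this
    rwa [if_neg (by lia), if_neg (by lia)] at this
  · intro hx
    have hu : x ∈ cyl lo hi u := by
      intro i h1 h2
      rw [hx i (by lia) (by lia)]
      exact surgery_mem_cyl hlo' huv.symm hz i h1 h2
    refine ⟨fun i h1 h2 => ?_, hu⟩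
    unfold surgery
    split_ifs with h3 h4
    · rw [hx i (by lia) (by lia), surgery, if_pos h3]
    · exact (hz i (by lia) h4).symm
    · rw [hx _ (by lia) (by lia), surgery, if_neg (by lia), if_neg (by lia)]
      congr 1; ring

theorem pathWeight_surgery (P : Matrix A A ℝ) (hlo : lo ≤ hi) (hlo' : lo ≤ hi')
    (huv : u lo = v lo) (huv' : u hi = v hi') {K : ℤ} (hK : -K ≤ lo) (hK' : hi' ≤ K) {z : ℤ → A}
    (hz : z ∈ cyl lo hi' v) :
    pathWeight P (-K) (K + (hi - hi')) (surgery lo hi' hi u z) * pathWeight P lo hi' v =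
      pathWeight P (-K) K z * pathWeight P lo hi u := by
  have h1 : pathWeight P (-K) lo (surgery lo hi' hi u z) = pathWeight P (-K) lo z :=
    pathWeight_congr P fun i _ h => by simp [surgery, h]
  have h2 : pathWeight P lo hi (surgery lo hi' hi u z) = pathWeight P lo hi u :=
    pathWeight_congr P (surgery_mem_cyl hlo' huv.symm hz)
  have h3 : pathWeight P hi (K + (hi - hi')) (surgery lo hi' hi u z) = pathWeight P hi' K z := by
    have := pathWeight_shift P hi' K (hi - hi') (surgery lo hi' hi u z)
    rw [show hi' + (hi - hi') = hi by ring] at this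
    rw [this]
    refine pathWeight_congr P fun i hi1 hi2 => ?_
    have hmem := surgery_mem_cyl (hi' := hi) hlo' huv.symm hz hi hlo le_rfl
    rcases eq_or_lt_of_le hi1 with rfl | hlt
    · rw [show hi' + (hi - hi') = hi by ring, hmem, huv', hz hi' hlo' le_rfl]
    · unfold surgery
      rw [if_neg (by lia), if_neg (by lia)]
      congr 1; ring
  rw [pathWeight_split P (k := lo) hK (by lia), pathWeight_split P (k := hi) hlo (by lia),
    h1, h2, h3, pathWeight_split P (n := K) (k := lo) hK (by lia),
    pathWeight_split P (k := hi') hlo' hK', pathWeight_congr P hz]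
  ring

end Surgery

/-- Replacing the word `u` by the word `v` multiplies a Markov measure by the ratio of the
weights. -/
theorem IsMarkovMeasure.measure_surgery {S : Type*} [Fintype S] [MeasurableSpace S]
    [DiscreteMeasurableSpace S] {μ : Measure (ℤ → S)} [IsFiniteMeasure μ] {P : Matrix S S ℝ}
    {p : S → ℝ} (h : IsMarkovMeasure μ P p) (hP : ∀ i j, 0 ≤ P i j)
    {lo hi hi' : ℤ} {u v : ℤ → S} (hlo : lo ≤ hi) (hlo' : lo ≤ hi') (huv : u lo = v lo)
    (huv' : u hi = v hi') {B : Set (ℤ → S)} (hB : MeasurableSet B) :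
    ENNReal.ofReal (pathWeight P lo hi' v) * μ (surgery lo hi hi' v ⁻¹' B ∩ cyl lo hi u) =
      ENNReal.ofReal (pathWeight P lo hi u) * μ (B ∩ cyl lo hi' v) := by
  have hT := measurable_surgery lo hi hi' v
  have key : (pathWeight P lo hi' v).toNNReal • (μ.restrict (cyl lo hi u)).map (surgery lo hi hi' v)
      = (pathWeight P lo hi u).toNNReal • μ.restrict (cyl lo hi' v) := by
    refine measure_ext_of_cyl (lo.natAbs + hi.natAbs + hi'.natAbs) fun K hK z => ?_
    have hc := measurableSet_cyl (-(K : ℤ)) K z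
    rw [Measure.smul_apply, Measure.smul_apply, Measure.map_apply hT hc,
      Measure.restrict_apply (hT hc), Measure.restrict_apply hc]
    change ENNReal.ofReal (pathWeight P lo hi' v) * _ = ENNReal.ofReal (pathWeight P lo hi u) * _
    by_cases hz : z ∈ cyl lo hi' v
    · have hsub : cyl (-(K : ℤ)) K z ∩ cyl lo hi' v = cyl (-(K : ℤ)) K z := by
        refine Set.inter_eq_left.mpr fun x hx i h1 h2 => ?_
        rw [hx i (by lia) (by lia), hz i h1 h2]
      rw [hsub, surgery_preimage_inter_cyl hlo hlo' huv (by lia) (by lia) hz,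
        h.measure_cyl (by lia), h.measure_cyl (by lia),
        ← ENNReal.ofReal_mul (pathWeight_nonneg hP _ _ _),
        ← ENNReal.ofReal_mul (pathWeight_nonneg hP _ _ _)]
      have hw := pathWeight_surgery P hlo hlo' huv huv' (K := K) (by lia) (by lia) hz
      have hend : surgery lo hi' hi u z (-(K : ℤ)) = z (-K) := by
        unfold surgery; rw [if_pos (by lia)]
      rw [hend]
      congr 1
      linear_combination p (z (-K)) * hw
    · have hempty : ∀ x ∈ cyl (-(K : ℤ)) K z, x ∉ cyl lo hi' v := by
        intro x hx hv
        refine hz fun i h1 h2 => ?_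
        rw [← hx i (by lia) (by lia), hv i h1 h2]
      have e1 : surgery lo hi hi' v ⁻¹' cyl (-K) K z ∩ cyl lo hi u = ∅ := by
        refine Set.eq_empty_of_forall_notMem fun x hx => ?_
        exact hempty _ hx.1 (surgery_mem_cyl hlo huv hx.2)
      have e2 : cyl (-(K : ℤ)) K z ∩ cyl lo hi' v = ∅ :=
        Set.eq_empty_of_forall_notMem fun x hx => hempty _ hx.1 hx.2
      simp only [e1, e2, measure_empty, mul_zero]
  have := congrArg (fun m : Measure (ℤ → S) => m B) key
  simp only [Measure.smul_apply, Measure.map_apply hT hB, Measure.restrict_apply (hT hB),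
    Measure.restrict_apply hB] at this
  exact this

/-! ### Transport of words along a code with finite expected code length -/

/-- Points of the domain whose coding windows around `j` and `k` agree have the same image symbols
at `j` and `k`. -/
theorem IsFactorMap.eq_of_determinesAt {A B : Type*} [MeasurableSpace A] [MeasurableSpace B]
    {μ : Measure (ℤ → A)} {ν : Measure (ℤ → B)} {D : Set (ℤ → A)} {φ : (ℤ → A) → (ℤ → B)}
    (hφ : IsFactorMap μ ν D φ) {x y : ℤ → A} (hx : x ∈ D) (hy : y ∈ D) {j k : ℤ} {q r : ℕ}
    (hd : DeterminesAt D φ q r (shiftBy j x))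
    (hxy : ∀ i : ℤ, -(q : ℤ) ≤ i → i ≤ r → y (i + k) = x (i + j)) : φ y k = φ x j := by
  have := hd (shiftBy k y) ((hφ.shiftBy_mem_iff k y).mpr hy) hxy
  rw [hφ.map_shiftBy k hy, hφ.map_shiftBy j hx] at this
  simpa [shiftBy] using this

section Transport

variable {S₁ S₂ : Type*} [Fintype S₁] [Fintype S₂]
  [MeasurableSpace S₁] [DiscreteMeasurableSpace S₁]
  [MeasurableSpace S₂] [DiscreteMeasurableSpace S₂]
  {P : Matrix S₁ S₁ ℝ} {p : S₁ → ℝ} {μ : Measure (ℤ → S₁)}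
  {Q : Matrix S₂ S₂ ℝ} {p' : S₂ → ℝ} {ν : Measure (ℤ → S₂)}
  {D : Set (ℤ → S₁)} {E : Set (ℤ → S₂)} {φ : (ℤ → S₁) → (ℤ → S₂)} {ψ : (ℤ → S₂) → (ℤ → S₁)}

/-- Almost every point `x` in the cylinder of `u` is such that replacing `u` by `v` changes `φ x`
by a replacement of words. -/
theorem ae_map_surgery [IsProbabilityMeasure μ] (hμ : IsMarkovMeasure μ P p)
    (hP : ∀ i j, 0 ≤ P i j) (hφ : IsFactorMap μ ν D φ)
    (hlen : ∫⁻ x, codeLength D φ x ∂μ < ⊤) {n m : ℕ} {u v : ℤ → S₁} (huv : u 0 = v 0)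
    (huv' : u n = v m) (hv : 0 < pathWeight P 0 m v) :
    ∀ᵐ x ∂μ, x ∈ cyl 0 n u → x ∈ D ∧ surgery 0 n m v x ∈ D ∧ ∃ N : ℕ,
      φ x (-N) = φ (surgery 0 n m v x) (-N) ∧ φ x (n + N) = φ (surgery 0 n m v x) (m + N) ∧
      surgery (-N) (n + N) (m + N) (φ (surgery 0 n m v x)) (φ x) = φ (surgery 0 n m v x) := by
  have hDc : μ Dᶜ = 0 := (prob_compl_eq_zero_iff hφ.dom_measurable).mpr hφ.dom_full
  have hTD : ∀ᵐ x ∂μ, x ∈ cyl 0 n u → surgery 0 n m v x ∈ D := by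
    have h := hμ.measure_surgery hP (lo := 0) (hi := n) (hi' := m) (u := u) (v := v) (by lia)
      (by lia) huv huv' hφ.dom_measurable.compl
    rw [measure_mono_null Set.inter_subset_left hDc, mul_zero, mul_eq_zero] at h
    have h0 := h.resolve_left (by simpa using hv)
    filter_upwards [measure_eq_zero_iff_ae_notMem.mp h0] with x hx hxu
    by_contra hn
    exact hx ⟨hn, hxu⟩
  filter_upwards [hTD, measure_eq_zero_iff_ae_notMem.mp hDc,
    ae_eventually_determinesAt hμ hφ.measurable_map hlen (fun j => -(j : ℤ)),
    ae_eventually_determinesAt hμ hφ.measurable_map hlen (fun j => n + (j : ℤ))]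
    with x hTx hxD hleft hright hxu
  replace hxD : x ∈ D := not_not.mp hxD
  replace hTx := hTx hxu
  obtain ⟨N, hN⟩ := eventually_atTop.mp (hleft.and hright)
  have hl : ∀ j : ℕ, N ≤ j → φ (surgery 0 n m v x) (-j) = φ x (-j) := by
    intro j hj
    obtain ⟨q, r, hqr, hd⟩ := (hN j hj).1
    refine hφ.eq_of_determinesAt hxD hTx hd fun i h1 h2 => ?_
    rw [surgery, if_pos (by lia)]
  have hr : ∀ j : ℕ, N ≤ j → φ (surgery 0 n m v x) (m + j) = φ x (n + j) := by
    intro j hj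
    obtain ⟨q, r, hqr, hd⟩ := (hN j hj).2
    refine hφ.eq_of_determinesAt hxD hTx hd fun i h1 h2 => ?_
    by_cases hi : i + (m + j) ≤ m
    · rw [surgery_mem_cyl (u := u) (by lia) huv hxu _ (by lia) hi,
        show i + ((m : ℤ) + j) = m by lia, show i + ((n : ℤ) + j) = n by lia,
        hxu n (by lia) le_rfl, huv']
    · rw [surgery, if_neg (by lia), if_neg hi]
      congr 1; ring
  refine ⟨hxD, hTx, N, (hl N le_rfl).symm, (hr N le_rfl).symm, ?_⟩
  ext i
  rw [surgery]
  split_ifs with h1 h2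
  · have := hl (-i).toNat (by lia)
    rw [show -(((-i).toNat : ℕ) : ℤ) = i by lia] at this
    exact this.symm
  · rfl
  · have := hr (i - m).toNat (by lia)
    rw [show (m : ℤ) + ((i - m).toNat : ℕ) = i by lia,
      show (n : ℤ) + ((i - m).toNat : ℕ) = i + (n + N - (m + N)) by lia] at this
    exact this.symm

/-- If, on a set of positive measure, `φ` carries the replacement of `u` by `v` to the replacement of
`a` by `b`, then the two replacements have the same weight ratio. -/
theorem pathWeight_mul_eq_of_map_surgery [IsProbabilityMeasure μ] [IsFiniteMeasure ν]
    (hμ : IsMarkovMeasure μ P p) (hP : ∀ i j, 0 ≤ P i j)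
    (hν : IsMarkovMeasure ν Q p') (hQ : ∀ i j, 0 ≤ Q i j)
    (hφ : IsFactorMap μ ν D φ) (hψ : Measurable ψ) (hE : MeasurableSet E)
    (hDE : ∀ x ∈ D, φ x ∈ E ∧ ψ (φ x) = x) (hED : ∀ y ∈ E, φ (ψ y) = y)
    {l r r' lo hi hi' : ℤ} {u v : ℤ → S₁} {a b : ℤ → S₂} (hl : l ≤ r) (hl' : l ≤ r')
    (huv : u l = v l) (huv' : u r = v r') (hlo : lo ≤ hi) (hlo' : lo ≤ hi')
    (hab : a lo = b lo) (hab' : a hi = b hi') (hv : 0 < pathWeight P l r' v)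
    {Z : Set (ℤ → S₁)} (hZ : MeasurableSet Z) (hZ0 : μ Z ≠ 0)
    (hZu : Z ⊆ cyl l r u) (hZD : Z ⊆ D) (hZT : ∀ x ∈ Z, surgery l r r' v x ∈ D)
    (hZa : ∀ x ∈ Z, φ x ∈ cyl lo hi a)
    (hZφ : ∀ x ∈ Z, φ (surgery l r r' v x) = surgery lo hi hi' b (φ x)) :
    0 < pathWeight Q lo hi a ∧ 0 < pathWeight Q lo hi' b ∧
      pathWeight P l r u * pathWeight Q lo hi' b = pathWeight P l r' v * pathWeight Q lo hi a := by
  have hDae : ∀ᵐ x ∂μ, x ∈ D := by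
    exact (measure_eq_zero_iff_ae_notMem.mp
      ((prob_compl_eq_zero_iff hφ.dom_measurable).mpr hφ.dom_full)).mono fun _ => not_not.mp
  set W : Set (ℤ → S₂) := E ∩ ψ ⁻¹' Z
  have hW : MeasurableSet W := hE.inter (hψ hZ)
  have hφW : ∀ x ∈ Z, φ x ∈ W := fun x hx =>
    ⟨(hDE x (hZD hx)).1, by rw [Set.mem_preimage, (hDE x (hZD hx)).2]; exact hx⟩
  have hWa : W ⊆ cyl lo hi a := fun y hy => by rw [← hED y hy.1]; exact hZa _ hy.2
  have hνW : ν W = μ Z := by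
    rw [hφ.pushforward, Measure.map_apply hφ.measurable_map hW]
    refine measure_congr ?_
    filter_upwards [hDae] with x hx
    refine propext ⟨fun h => ?_, hφW x⟩
    have := h.2
    rwa [Set.mem_preimage, (hDE x hx).2] at this
  have hνW' : ν (surgery lo hi' hi a ⁻¹' W ∩ cyl lo hi' b) =
      μ (surgery l r' r u ⁻¹' Z ∩ cyl l r' v) := by
    rw [hφ.pushforward, Measure.map_apply hφ.measurable_map
      ((measurable_surgery _ _ _ _ hW).inter (measurableSet_cyl _ _ _))]
    refine measure_congr ?_
    filter_upwards [hDae] with x' hx'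
    refine propext ⟨fun ⟨h1, h2⟩ => ?_, fun ⟨h1, h2⟩ => ?_⟩
    · set x := ψ (surgery lo hi' hi a (φ x'))
      have hx : x ∈ Z := h1.2
      have hxx' : surgery l r r' v x = x' := by
        rw [← (hDE _ (hZT x hx)).2, hZφ x hx, hED _ h1.1, surgery_surgery hlo h2, (hDE x' hx').2]
      refine ⟨?_, ?_⟩
      · rw [Set.mem_preimage, ← hxx', surgery_surgery hl' (hZu hx)]
        exact hx
      · rw [← hxx']
        exact surgery_mem_cyl hl huv (hZu hx)
    · have hx := hZφ _ h1
      rw [surgery_surgery hl h2] at hx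
      refine ⟨?_, ?_⟩
      · change surgery lo hi' hi a (φ x') ∈ W
        rw [hx, surgery_surgery hlo' (hZa _ h1)]
        exact hφW _ h1
      · rw [hx]
        exact surgery_mem_cyl hlo hab (hZa _ h1)
  have e1 := hμ.measure_surgery hP hl' hl huv.symm huv'.symm hZ
  have e2 := hν.measure_surgery hQ hlo' hlo hab.symm hab'.symm hW
  rw [Set.inter_eq_left.mpr hZu] at e1
  rw [hνW', Set.inter_eq_left.mpr hWa, hνW] at e2
  set z := μ Z
  set z' := μ (surgery l r' r u ⁻¹' Z ∩ cyl l r' v)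
  have hz' : z' ≠ 0 := by
    intro h0
    rw [h0, mul_zero, eq_comm, mul_eq_zero] at e1
    exact e1.elim (by simpa using hv) hZ0
  have ha : 0 < pathWeight Q lo hi a := by
    refine lt_of_le_of_ne (pathWeight_nonneg hQ _ _ _) fun h0 => hZ0 ?_
    have := hν.measure_cyl hlo a
    rw [← h0, mul_zero, ENNReal.ofReal_zero] at this
    rw [← hνW]
    exact measure_mono_null hWa this
  have hb : 0 < pathWeight Q lo hi' b := by
    refine lt_of_le_of_ne (pathWeight_nonneg hQ _ _ _) fun h0 => ?_
    rw [← h0, ENNReal.ofReal_zero, zero_mul, mul_eq_zero] at e2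
    exact e2.elim (by simpa using ha) hz'
  refine ⟨ha, hb, ?_⟩
  have f1 := congrArg ENNReal.toReal e1
  have f2 := congrArg ENNReal.toReal e2
  simp only [ENNReal.toReal_mul, ENNReal.toReal_ofReal (pathWeight_nonneg hP _ _ _),
    ENNReal.toReal_ofReal (pathWeight_nonneg hQ _ _ _)] at f1 f2
  have hz : z.toReal ≠ 0 := ENNReal.toReal_ne_zero.mpr ⟨hZ0, measure_ne_top _ _⟩
  refine mul_right_cancel₀ hz ?_
  linear_combination pathWeight Q lo hi a * f1 - pathWeight P l r u * f2

/-- Two words of `P` with common end points yield two words of `Q` with common end points, the same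
difference of lengths, and the same ratio of weights. -/
theorem exists_words_transport [IsProbabilityMeasure μ] [IsFiniteMeasure ν]
    (hμ : IsMarkovMeasure μ P p) (hP : ∀ i j, 0 ≤ P i j) (hp : ∀ i, 0 < p i)
    (hν : IsMarkovMeasure ν Q p') (hQ : ∀ i j, 0 ≤ Q i j)
    (hφ : IsFactorMap μ ν D φ) (hψ : Measurable ψ) (hE : MeasurableSet E)
    (hDE : ∀ x ∈ D, φ x ∈ E ∧ ψ (φ x) = x) (hED : ∀ y ∈ E, φ (ψ y) = y)
    (hlen : ∫⁻ x, codeLength D φ x ∂μ < ⊤) {n m : ℕ} {u v : ℤ → S₁} (huv : u 0 = v 0)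
    (huv' : u n = v m) (hu : 0 < pathWeight P 0 n u) (hv : 0 < pathWeight P 0 m v) :
    ∃ (N : ℕ) (a b : ℤ → S₂), a (-N) = b (-N) ∧ a (n + N) = b (m + N) ∧
      0 < pathWeight Q (-N) (n + N) a ∧ 0 < pathWeight Q (-N) (m + N) b ∧
      pathWeight P 0 n u * pathWeight Q (-N) (m + N) b =
        pathWeight P 0 m v * pathWeight Q (-N) (n + N) a := by
  set T := surgery 0 n m v
  have hT : Measurable T := measurable_surgery _ _ _ _
  let Z : ℕ → (ℤ → S₂) → (ℤ → S₂) → Set (ℤ → S₁) := fun N a b =>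
    ((cyl 0 n u ∩ D) ∩ T ⁻¹' D) ∩ ((φ ⁻¹' cyl (-N) (n + N) a ∩ (φ ∘ T) ⁻¹' cyl (-N) (m + N) b) ∩
      {x | ∀ i, φ (T x) i = surgery (-N) (n + N) (m + N) b (φ x) i})
  have hφT : Measurable (φ ∘ T) := hφ.measurable_map.comp hT
  have hZmeas : ∀ N a b, MeasurableSet (Z N a b) := by
    intro N a b
    refine (((measurableSet_cyl _ _ _).inter hφ.dom_measurable).inter (hT hφ.dom_measurable)).inter
      (((hφ.measurable_map (measurableSet_cyl _ _ _)).inter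
        (hφT (measurableSet_cyl _ _ _))).inter ?_)
    rw [Set.ofPred_forall]
    exact MeasurableSet.iInter fun i => measurableSet_eq_fun ((measurable_pi_apply i).comp hφT)
      ((measurable_pi_apply i).comp ((measurable_surgery _ _ _ _).comp hφ.measurable_map))
  suffices h : ∃ (N : ℕ) (a b : ℤ → S₂), a (-N) = b (-N) ∧ a (n + N) = b (m + N) ∧
      μ (Z N a b) ≠ 0 by
    obtain ⟨N, a, b, hab, hab', hpos⟩ := h
    exact ⟨N, a, b, hab, hab', pathWeight_mul_eq_of_map_surgery hμ hP hν hQ hφ hψ hE hDE hED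
      (by lia) (by lia) huv huv' (by lia) (by lia) hab hab' hv (hZmeas N a b) hpos
      (fun x hx => hx.1.1.1) (fun x hx => hx.1.1.2) (fun x hx => hx.1.2) (fun x hx => hx.2.1.1)
      (fun x hx => funext hx.2.2)⟩
  by_contra! hcon
  have hne : Nonempty S₂ := by
    obtain ⟨x⟩ := nonempty_of_isProbabilityMeasure μ
    exact ⟨φ x 0⟩
  choose F hFc hF using fun N : ℕ => exists_countable_words S₂ (-N) (n + N)
  choose G hGc hG using fun N : ℕ => exists_countable_words S₂ (-N) (m + N)
  have hnull : μ (⋃ N : ℕ, ⋃ a ∈ F N, ⋃ b ∈ G N,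
      {x | x ∈ Z N a b ∧ a (-N) = b (-N) ∧ a (n + N) = b (m + N)}) = 0 := by
    refine measure_iUnion_null fun N => (measure_biUnion_null_iff (hFc N)).mpr fun a _ =>
      (measure_biUnion_null_iff (hGc N)).mpr fun b _ => ?_
    by_cases h : a (-N) = b (-N) ∧ a (n + N) = b (m + N)
    · exact measure_mono_null (fun x hx => hx.1) (hcon N a b h.1 h.2)
    · convert measure_empty (μ := μ)
      exact Set.eq_empty_of_forall_notMem fun x hx => h hx.2
  have hcyl : μ (cyl 0 n u) = 0 := by
    rw [measure_eq_zero_iff_ae_notMem]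
    filter_upwards [measure_eq_zero_iff_ae_notMem.mp hnull,
      ae_map_surgery hμ hP hφ hlen huv huv' hv] with x hx hmap hxu
    obtain ⟨hxD, hTx, N, h1, h2, h3⟩ := hmap hxu
    obtain ⟨a, ha, hxa⟩ := hF N (φ x)
    obtain ⟨b, hb, hxb⟩ := hG N (φ (T x))
    refine hx (Set.mem_iUnion.mpr ⟨N, Set.mem_biUnion ha (Set.mem_biUnion hb
      ⟨⟨⟨⟨hxu, hxD⟩, hTx⟩, ⟨hxa, hxb⟩, fun i => ?_⟩, ?_, ?_⟩)⟩)
    · rw [← congrFun h3 i, surgery, surgery]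
      split_ifs with h4 h5
      · rfl
      · exact hxb i (by lia) h5
      · rfl
    · rw [← hxa _ (by lia) (by lia), ← hxb _ (by lia) (by lia)]
      exact h1
    · rw [← hxa _ (by lia) (by lia), ← hxb _ (by lia) (by lia)]
      exact h2
  rw [hμ.measure_cyl (by lia), ENNReal.ofReal_eq_zero] at hcyl
  exact absurd (mul_pos (hp (u 0)) hu) (not_lt.mpr hcyl)

end Transport

/-! ### Weights of paths and the groups `Γ` and `Δ` -/

/-- `w` is the strictly positive weight of a path of length `n` from `s` to `t`. -/
def IsPathWeight {S : Type*} (P : Matrix S S ℝ) (s t : S) (n : ℕ) (w : ℝ) : Prop :=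
  0 < w ∧ ∃ c : ℕ → S, c 0 = s ∧ c n = t ∧ cycleWeight P n c = w

section Groups

variable {S : Type*} {P : Matrix S S ℝ}

theorem IsPathWeight.trans {s t r : S} {n m : ℕ} {w w' : ℝ} (h : IsPathWeight P s t n w)
    (h' : IsPathWeight P t r m w') : IsPathWeight P s r (n + m) (w * w') := by
  obtain ⟨hw, c, hc0, hcn, rfl⟩ := h
  obtain ⟨hw', d, hd0, hdm, rfl⟩ := h'
  refine ⟨mul_pos hw hw', fun i => if i ≤ n then c i else d (i - n), by simpa using hc0, ?_, ?_⟩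
  · rcases Nat.eq_zero_or_pos m with rfl | hm
    · simp [hcn, ← hd0, hdm]
    · simp [hm.ne', hdm]
  · simp only [cycleWeight]
    rw [Finset.prod_range_add]
    congr 1
    · refine Finset.prod_congr rfl fun i hi => ?_
      rw [Finset.mem_range] at hi
      rw [if_pos (by lia), if_pos (by lia)]
    · refine Finset.prod_congr rfl fun i _ => ?_
      rw [if_neg (show ¬ n + i + 1 ≤ n by lia), show n + i + 1 - n = i + 1 by lia]
      rcases Nat.eq_zero_or_pos i with rfl | hi
      · simp [hcn, hd0]
      · rw [if_neg (by lia), Nat.add_sub_cancel_left]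

theorem exists_isPathWeight_of_pow_pos [Fintype S] [DecidableEq S] (hP : ∀ i j, 0 ≤ P i j) {n : ℕ}
    {s t : S} (h : 0 < (P ^ n) s t) : ∃ w, IsPathWeight P s t n w := by
  induction n generalizing t with
  | zero =>
    have : s = t := by
      by_contra hst
      simp [Matrix.one_apply_ne hst] at h
    exact ⟨1, one_pos, fun _ => s, rfl, this, by simp [cycleWeight]⟩
  | succ n ih =>
    rw [pow_succ, Matrix.mul_apply] at h
    obtain ⟨k, _, hk⟩ := Finset.exists_lt_of_sum_lt
      (f := fun _ : S => (0 : ℝ)) (by simpa using h)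
    have hkt : 0 < P k t := lt_of_le_of_ne (hP k t) fun h0 => by simp [← h0] at hk
    obtain ⟨w, hw⟩ := ih (pos_of_mul_pos_left hk hkt.le)
    refine ⟨w * P k t, hw.trans ⟨hkt, fun i => if i = 0 then k else t, rfl, rfl, ?_⟩⟩
    simp [cycleWeight]

theorem IsPrimitive.exists_isPathWeight [Fintype S] [DecidableEq S] (hP : IsStochastic P)
    (h : IsPrimitive P) (s t : S) : ∃ n w, IsPathWeight P s t n w := by
  obtain ⟨n, hn⟩ := h
  exact ⟨n, exists_isPathWeight_of_pow_pos hP.1 (hn s t)⟩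

theorem IsPrimitive.stationary_pos [Fintype S] [DecidableEq S] (hP : IsPrimitive P) {p : S → ℝ}
    (hp : IsStationaryVector P p) (j : S) : 0 < p j := by
  obtain ⟨n, hn⟩ := hP
  have hpow : ∀ n : ℕ, ∀ j, ∑ i, p i * (P ^ n) i j = p j := by
    intro n
    have hstep : Matrix.vecMul p P = p := funext hp.2.2
    have : Matrix.vecMul p (P ^ n) = p := by
      induction n with
      | zero => simp
      | succ n ih => rw [pow_succ, ← Matrix.vecMul_vecMul, ih, hstep]
    exact congrFun this
  obtain ⟨i, _, hi⟩ := Finset.exists_lt_of_sum_lt (s := Finset.univ) (f := fun _ : S => (0 : ℝ))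
    (g := p) (by simp [hp.2.1])
  rw [← hpow n j]
  exact Finset.sum_pos' (fun k _ => mul_nonneg (hp.1 k) (hn k j).le)
    ⟨i, Finset.mem_univ i, mul_pos hi (hn i j)⟩

theorem mem_DeltaGroup_of_loops {s : S} {n : ℕ} {w w' : ℝ} (h : IsPathWeight P s s n w)
    (h' : IsPathWeight P s s n w') {x : ℝˣ} (hx : (x : ℝ) = w / w') : x ∈ DeltaGroup P := by
  obtain ⟨hw, c, hc0, hcn, rfl⟩ := h
  obtain ⟨hw', d, hd0, hdn, rfl⟩ := h'
  rcases Nat.eq_zero_or_pos n with rfl | hn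
  · have : x = 1 := Units.ext (by simpa [cycleWeight] using hx)
    exact this ▸ one_mem _
  · exact Subgroup.subset_closure ⟨n, c, d, hn, hcn.trans hc0.symm, hdn.trans hd0.symm,
      hc0.trans hd0.symm, hw, hw', hx⟩

theorem mem_GammaGroup_of_loop {s : S} {n : ℕ} {w : ℝ} (h : IsPathWeight P s s n w)
    {x : ℝˣ} (hx : (x : ℝ) = w) : x ∈ GammaGroup P := by
  obtain ⟨hw, c, hc0, hcn, rfl⟩ := h
  rcases Nat.eq_zero_or_pos n with rfl | hn
  · have : x = 1 := Units.ext (by simpa [cycleWeight] using hx)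
    exact this ▸ one_mem _
  · exact Subgroup.subset_closure ⟨n, c, hn, hcn.trans hc0.symm, hw, hx⟩

end Groups

/-- Two paths of `P` with common end points can be matched with two paths of `Q` with common end
points, the same difference of lengths, and the same ratio of weights. -/
def TransportsPaths {S₁ S₂ : Type*} (P : Matrix S₁ S₁ ℝ) (Q : Matrix S₂ S₂ ℝ) : Prop :=
  ∀ ⦃s t : S₁⦄ ⦃n m : ℕ⦄ ⦃w w' : ℝ⦄, IsPathWeight P s t n w → IsPathWeight P s t m w' →
    ∃ (s' t' : S₂) (k : ℕ) (a b : ℝ), IsPathWeight Q s' t' (n + k) a ∧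
      IsPathWeight Q s' t' (m + k) b ∧ w * b = w' * a

section Invariants

variable {S₁ S₂ : Type*} {P : Matrix S₁ S₁ ℝ} {Q : Matrix S₂ S₂ ℝ}

/-- The paths provided by `TransportsPaths` may be taken to be loops. -/
theorem TransportsPaths.exists_loops (h : TransportsPaths P Q)
    (hQ : ∀ s t, ∃ n w, IsPathWeight Q s t n w) {s t : S₁} {n m : ℕ} {w w' : ℝ}
    (hw : IsPathWeight P s t n w) (hw' : IsPathWeight P s t m w') :
    ∃ (s' : S₂) (k : ℕ) (a b : ℝ), IsPathWeight Q s' s' (n + k) a ∧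
      IsPathWeight Q s' s' (m + k) b ∧ w / w' = a / b := by
  obtain ⟨s', t', k, a, b, ha, hb, hab⟩ := h hw hw'
  obtain ⟨l, e, he⟩ := hQ t' s'
  refine ⟨s', k + l, a * e, b * e, ?_, ?_, ?_⟩
  · rw [← add_assoc]; exact ha.trans he
  · rw [← add_assoc]; exact hb.trans he
  · rw [mul_div_mul_right _ _ he.1.ne', div_eq_div_iff hw'.1.ne' hb.1.ne', hab, mul_comm]

/-- The weight of a loop is the ratio of the weights of two loops of `Q`. -/
theorem TransportsPaths.exists_loops_of_loop (h : TransportsPaths P Q)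
    (hQ : ∀ s t, ∃ n w, IsPathWeight Q s t n w) {s : S₁} {n : ℕ} {w : ℝ}
    (hw : IsPathWeight P s s n w) :
    ∃ (s' : S₂) (k : ℕ) (a b : ℝ), IsPathWeight Q s' s' (n + k) a ∧
      IsPathWeight Q s' s' k b ∧ w = a / b := by
  have h0 : IsPathWeight P s s 0 1 := ⟨one_pos, fun _ => s, rfl, rfl, by simp [cycleWeight]⟩
  obtain ⟨s', k, a, b, ha, hb, hab⟩ := h.exists_loops hQ hw h0
  exact ⟨s', k, a, b, ha, by rwa [zero_add] at hb, by rwa [div_one] at hab⟩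

theorem TransportsPaths.deltaGroup_le (h : TransportsPaths P Q)
    (hQ : ∀ s t, ∃ n w, IsPathWeight Q s t n w) : DeltaGroup P ≤ DeltaGroup Q := by
  refine (Subgroup.closure_le _).mpr ?_
  rintro x ⟨n, c, d, -, hc, hd, hcd, hcw, hdw, hx⟩
  obtain ⟨s', k, a, b, ha, hb, hab⟩ := h.exists_loops hQ
    (⟨hcw, c, rfl, hc, rfl⟩ : IsPathWeight P (c 0) (c 0) n _)
    ⟨hdw, d, hcd.symm, hd.trans hcd.symm, rfl⟩
  exact mem_DeltaGroup_of_loops ha hb (hx.trans hab)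

theorem TransportsPaths.gammaGroup_le (h : TransportsPaths P Q)
    (hQ : ∀ s t, ∃ n w, IsPathWeight Q s t n w) : GammaGroup P ≤ GammaGroup Q := by
  refine (Subgroup.closure_le _).mpr ?_
  rintro x ⟨n, c, -, hc, hcw, hx⟩
  obtain ⟨s', k, a, b, ha, hb, hab⟩ := h.exists_loops_of_loop hQ
    (⟨hcw, c, rfl, hc, rfl⟩ : IsPathWeight P (c 0) (c 0) n _)
  have hxe : x = Units.mk0 a ha.1.ne' / Units.mk0 b hb.1.ne' :=
    Units.ext (by rw [Units.val_div_eq_div_val]; exact hx.trans hab)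
  rw [hxe]
  exact div_mem (mem_GammaGroup_of_loop ha rfl) (mem_GammaGroup_of_loop hb rfl)

theorem TransportsPaths.cycleWeight_div_mem (h : TransportsPaths P Q)
    (hQ : ∀ s t, ∃ n w, IsPathWeight Q s t n w) {n : ℕ} {c : ℕ → S₁} {d : ℕ → S₂}
    (hc : IsCycle n c) (hd : IsCycle n d) (hcw : 0 < cycleWeight P n c)
    (hdw : 0 < cycleWeight Q n d) {x : ℝˣ} (hx : (x : ℝ) = cycleWeight P n c / cycleWeight Q n d) :
    x ∈ DeltaGroup Q := by
  obtain ⟨s', k, a, b, ha, hb, hab⟩ := h.exists_loops_of_loop hQ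
    (⟨hcw, c, rfl, hc, rfl⟩ : IsPathWeight P (c 0) (c 0) n _)
  have hdp : IsPathWeight Q (d 0) (d 0) n (cycleWeight Q n d) := ⟨hdw, d, rfl, hd, rfl⟩
  obtain ⟨i, e, he⟩ := hQ s' (d 0)
  obtain ⟨j, f, hf⟩ := hQ (d 0) s'
  have h1 := ha.trans (he.trans hf)
  have h2 := hb.trans (he.trans (hdp.trans hf))
  rw [show k + (i + (n + j)) = n + k + (i + j) by ring] at h2
  refine mem_DeltaGroup_of_loops h1 h2 ?_
  have := hb.1.ne'
  have := he.1.ne'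
  have := hf.1.ne'
  have := hdw.ne'
  rw [hx, hab]
  field_simp

end Invariants

/-- A finitary code with finite expected code length and measurable inverse transports paths. -/
theorem IsFactorMap.transportsPaths {S₁ S₂ : Type*} [Fintype S₁] [Fintype S₂]
    [MeasurableSpace S₁] [DiscreteMeasurableSpace S₁]
    [MeasurableSpace S₂] [DiscreteMeasurableSpace S₂]
    {P : Matrix S₁ S₁ ℝ} {p : S₁ → ℝ} {μ : Measure (ℤ → S₁)}
    {Q : Matrix S₂ S₂ ℝ} {p' : S₂ → ℝ} {ν : Measure (ℤ → S₂)}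
    {D : Set (ℤ → S₁)} {E : Set (ℤ → S₂)} {φ : (ℤ → S₁) → (ℤ → S₂)} {ψ : (ℤ → S₂) → (ℤ → S₁)}
    [IsProbabilityMeasure μ] [IsFiniteMeasure ν]
    (hφ : IsFactorMap μ ν D φ) (hμ : IsMarkovMeasure μ P p) (hP : ∀ i j, 0 ≤ P i j)
    (hp : ∀ i, 0 < p i) (hν : IsMarkovMeasure ν Q p') (hQ : ∀ i j, 0 ≤ Q i j)
    (hψ : Measurable ψ) (hE : MeasurableSet E)
    (hDE : ∀ x ∈ D, φ x ∈ E ∧ ψ (φ x) = x) (hED : ∀ y ∈ E, φ (ψ y) = y)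
    (hlen : ∫⁻ x, codeLength D φ x ∂μ < ⊤) : TransportsPaths P Q := by
  rintro s t n m - - ⟨hcw, c, rfl, rfl, rfl⟩ ⟨hdw, d, hd0, hdm, rfl⟩
  have hw : ∀ (n : ℕ) (c : ℕ → S₁),
      pathWeight P 0 n (fun i => c i.toNat) = cycleWeight P n c := by
    intro n c
    have := pathWeight_eq_cycleWeight P 0 n (fun i => c i.toNat)
    simpa using this
  obtain ⟨N, a, b, hab, hab', ha, hb, heq⟩ := exists_words_transport hμ hP hp hν hQ hφ hψ hE hDE hED
    hlen (n := n) (m := m) (u := fun i => c i.toNat) (v := fun i => d i.toNat) hd0.symm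
    (by simpa using hdm.symm) (by rwa [hw]) (by rwa [hw])
  have hpath : ∀ (n : ℕ) (a : ℤ → S₂), 0 < pathWeight Q (-N) (n + N) a →
      IsPathWeight Q (a (-N)) (a (n + N)) (n + 2 * N) (pathWeight Q (-N) (n + N) a) := by
    intro n a ha
    have hend : -(N : ℤ) + (n + 2 * N : ℕ) = n + N := by push_cast; ring
    refine ⟨ha, fun i => a (-N + i), by simp, congrArg a hend, ?_⟩
    rw [← pathWeight_eq_cycleWeight, hend]
  refine ⟨a (-N), a (n + N), 2 * N, _, _, hpath n a ha, ?_, by rw [← hw, ← hw]; exact heq⟩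
  rw [hab, hab']
  exact hpath m b hb

/-- **Parry–Schmidt.** If the mixing Markov shifts of `P` and `Q` are finitarily
isomorphic with finite expected code times, then `Γ_P = Γ_Q`, `Δ_P = Δ_Q`, and the
distinguished generators agree: for every `n ≥ 1`, the ratio of any strictly positive
weight of a cycle of length `n` in `P` to any strictly positive weight of a cycle of
length `n` in `Q` belongs to `Δ_P`. -/
theorem gamma_delta_generator_invariants_of_fect
    {S₁ S₂ : Type*} [Fintype S₁] [DecidableEq S₁] [Fintype S₂] [DecidableEq S₂]
    [MeasurableSpace S₁] [DiscreteMeasurableSpace S₁]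
    [MeasurableSpace S₂] [DiscreteMeasurableSpace S₂]
    (P : Matrix S₁ S₁ ℝ) (hPstoch : IsStochastic P) (hPprim : IsPrimitive P)
    (ppi₁ : S₁ → ℝ) (hppi₁ : IsStationaryVector P ppi₁)
    (μ : Measure (ℤ → S₁)) (hμ : IsMarkovMeasure μ P ppi₁)
    (Q : Matrix S₂ S₂ ℝ) (hQstoch : IsStochastic Q) (hQprim : IsPrimitive Q)
    (ppi₂ : S₂ → ℝ) (hppi₂ : IsStationaryVector Q ppi₂)
    (ν : Measure (ℤ → S₂)) (hν : IsMarkovMeasure ν Q ppi₂)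
    (hfect : FinitarilyIsomorphicFect μ ν) :
    GammaGroup (S := S₁) P = GammaGroup (S := S₂) Q ∧
    DeltaGroup (S := S₁) P = DeltaGroup (S := S₂) Q ∧
    ∀ (n : ℕ), 0 < n → ∀ (c : ℕ → S₁) (d : ℕ → S₂),
      IsCycle n c → IsCycle n d →
      0 < cycleWeight P n c → 0 < cycleWeight Q n d →
      ∃ u ∈ DeltaGroup (S := S₁) P,
        (u : ℝ) = cycleWeight P n c / cycleWeight Q n d := by
  have hμ1 := hμ.isProbabilityMeasure hppi₁
  have hν1 := hν.isProbabilityMeasure hppi₂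
  obtain ⟨D, E, φ, ψ, ⟨hφ, hψ, -, -, hDE, hED⟩, hCφ, hCψ⟩ := hfect
  have hPQ : TransportsPaths P Q := hφ.transportsPaths hμ hPstoch.1 (hPprim.stationary_pos hppi₁) hν
    hQstoch.1 hψ.measurable_map hψ.dom_measurable hDE (fun y hy => (hED y hy).2) hCφ
  have hQP : TransportsPaths Q P := hψ.transportsPaths hν hQstoch.1 (hQprim.stationary_pos hppi₂) hμ
    hPstoch.1 hφ.measurable_map hφ.dom_measurable hED (fun x hx => (hDE x hx).2) hCψ
  have hPirr := hPprim.exists_isPathWeight hPstoch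
  have hQirr := hQprim.exists_isPathWeight hQstoch
  have hΔ := le_antisymm (hPQ.deltaGroup_le hQirr) (hQP.deltaGroup_le hPirr)
  refine ⟨le_antisymm (hPQ.gammaGroup_le hQirr) (hQP.gammaGroup_le hPirr), hΔ, ?_⟩
  intro n _ c d hc hd hcw hdw
  refine ⟨Units.mk0 _ (div_pos hcw hdw).ne', ?_, rfl⟩
  rw [hΔ]
  exact hPQ.cycleWeight_div_mem hQirr hc hd hcw hdw rfl
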